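/- Let N ≥ 1, p, q ≥ 0, 0 < T ≤ ∞, and let u₀, v₀ be nonnegative measurable functions on ℝ^N. The system (S) possesses a solution on ℝ^N × (0,T) if and only if the system (S) possesses a supersolution on ℝ^N × (0,T). -/

import Mathlib

open MeasureTheory ENNReal Filter

noncomputable section

/-- Euclidean space `ℝ^N`. -/
abbrev Euc (N : ℕ) := EuclideanSpace ℝ (Fin N)

/-- The heat semigroup applied to a (nonnegative) function `φ` on `ℝ^N`, with values in `[0,∞]`:
`[S(t)φ](x) = ∫ (4πt)^{-N/2} exp(-|x-y|²/(4t)) φ(y) dy`. -/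
noncomputable def heatS (N : ℕ) (t : ℝ) (φ : Euc N → ℝ) (x : Euc N) : ℝ≥0∞ :=
  ∫⁻ y, ENNReal.ofReal
    ((4 * Real.pi * t) ^ (-(N : ℝ) / 2) * Real.exp (-‖x - y‖ ^ 2 / (4 * t)) * φ y)

/-- The `L^∞` norm of `S(t)φ` on `ℝ^N`. -/
noncomputable def heatSup (N : ℕ) (t : ℝ) (φ : Euc N → ℝ) : ℝ≥0∞ :=
  essSup (heatS N t φ) volume

/-- The `L^{r,∞}(E)` quasinorm: for `1 < r < ∞` it is
`sup_{λ>0} λ |{x ∈ E : |f x| > λ}|^{1/r}`; for `r = 1` (resp. `r = ∞`)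
it is the usual `L¹(E)` (resp. `L^∞(E)`) norm. -/
noncomputable def wnorm (N : ℕ) (r : ℝ≥0∞) (f : Euc N → ℝ) (E : Set (Euc N)) : ℝ≥0∞ :=
  if r = 1 then ∫⁻ x in E, ENNReal.ofReal |f x|
  else if r = ⊤ then essSup (fun x => ENNReal.ofReal |f x|) (volume.restrict E)
  else ⨆ (l : ℝ) (_ : 0 < l), ENNReal.ofReal l * (volume {x ∈ E | l < |f x|}) ^ (1 / r.toReal)

/-- The uniformly local quasinorm `|||f|||_{r,ρ} = sup_x ‖f‖_{L^{r,∞}(B(x,ρ))}`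
(for `r = ∞` it is the `L^∞(ℝ^N)` norm). -/
noncomputable def ulocNorm (N : ℕ) (r : ℝ≥0∞) (ρ : ℝ) (f : Euc N → ℝ) : ℝ≥0∞ :=
  if r = ⊤ then essSup (fun x => ENNReal.ofReal |f x|) volume
  else ⨆ x : Euc N, wnorm N r f (Metric.ball x ρ)

/-- `u ∈ L^∞(τ, T-τ; L^∞(ℝ^N))` for every `τ ∈ (0, T/2)`. -/
def LocBdd (N : ℕ) (T : ℝ≥0∞) (u : Euc N → ℝ → ℝ) : Prop :=
  ∀ τ : ℝ, 0 < τ → ENNReal.ofReal (2 * τ) < T →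
    ∃ M : ℝ, ∀ t : ℝ, τ ≤ t → ENNReal.ofReal (t + τ) ≤ T →
      ∀ᵐ x ∂(volume : Measure (Euc N)), |u x t| ≤ M

/-- Regularity requirements on a pair `(u,v)`: nonnegativity, joint measurability and
uniform boundedness away from `t = 0` and `t = T`. -/
def PairRegular (N : ℕ) (T : ℝ≥0∞) (u v : Euc N → ℝ → ℝ) : Prop :=
  (∀ x t, 0 ≤ u x t) ∧ (∀ x t, 0 ≤ v x t) ∧
  Measurable (Function.uncurry u) ∧ Measurable (Function.uncurry v) ∧
  LocBdd N T u ∧ LocBdd N T v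

/-- The Duhamel identities for the system (S) `∂ₜu = Δu + v^p`, `∂ₜv = Δv + u^q` at time `t`. -/
def DuhamelSys (N : ℕ) (p q : ℝ) (u₀ v₀ : Euc N → ℝ) (u v : Euc N → ℝ → ℝ) (t : ℝ) : Prop :=
  (∀ᵐ x ∂(volume : Measure (Euc N)), ENNReal.ofReal (u x t) =
      heatS N t u₀ x + ∫⁻ s in Set.Ioo 0 t, heatS N (t - s) (fun y => v y s ^ p) x) ∧
  (∀ᵐ x ∂(volume : Measure (Euc N)), ENNReal.ofReal (v x t) =
      heatS N t v₀ x + ∫⁻ s in Set.Ioo 0 t, heatS N (t - s) (fun y => u y s ^ q) x)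

/-- The Duhamel inequalities (`≥`, with finite left-hand side) for the system (S) at time `t`. -/
def DuhamelSuperSys (N : ℕ) (p q : ℝ) (u₀ v₀ : Euc N → ℝ) (u v : Euc N → ℝ → ℝ) (t : ℝ) : Prop :=
  (∀ᵐ x ∂(volume : Measure (Euc N)),
      heatS N t u₀ x + (∫⁻ s in Set.Ioo 0 t, heatS N (t - s) (fun y => v y s ^ p) x) ≤
        ENNReal.ofReal (u x t)) ∧
  (∀ᵐ x ∂(volume : Measure (Euc N)),
      heatS N t v₀ x + (∫⁻ s in Set.Ioo 0 t, heatS N (t - s) (fun y => u y s ^ q) x) ≤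
        ENNReal.ofReal (v x t))

/-- `(u,v)` is a solution of the system (S) on `ℝ^N × (0,T)`. -/
def IsSolSys (N : ℕ) (p q : ℝ) (u₀ v₀ : Euc N → ℝ) (T : ℝ≥0∞) (u v : Euc N → ℝ → ℝ) : Prop :=
  PairRegular N T u v ∧
  ∀ t : ℝ, 0 < t → ENNReal.ofReal t < T → DuhamelSys N p q u₀ v₀ u v t

/-- `(u,v)` is a supersolution of the system (S) on `ℝ^N × (0,T)`. -/
def IsSuperSys (N : ℕ) (p q : ℝ) (u₀ v₀ : Euc N → ℝ) (T : ℝ≥0∞) (u v : Euc N → ℝ → ℝ) : Prop :=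
  PairRegular N T u v ∧
  ∀ t : ℝ, 0 < t → ENNReal.ofReal t < T → DuhamelSuperSys N p q u₀ v₀ u v t

/-- `(u,v)` is the minimal solution of the system (S) on `ℝ^N × (0,T)`. -/
def IsMinSolSys (N : ℕ) (p q : ℝ) (u₀ v₀ : Euc N → ℝ) (T : ℝ≥0∞)
    (u v : Euc N → ℝ → ℝ) : Prop :=
  IsSolSys N p q u₀ v₀ T u v ∧
  ∀ u' v' : Euc N → ℝ → ℝ, IsSolSys N p q u₀ v₀ T u' v' →
    ∀ t : ℝ, 0 < t → ENNReal.ofReal t < T →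
      (∀ᵐ x ∂(volume : Measure (Euc N)), u x t ≤ u' x t) ∧
      (∀ᵐ x ∂(volume : Measure (Euc N)), v x t ≤ v' x t)

/-- Regularity requirements on a scalar function `w`. -/
def ScalarRegular (N : ℕ) (T : ℝ≥0∞) (w : Euc N → ℝ → ℝ) : Prop :=
  (∀ x t, 0 ≤ w x t) ∧ Measurable (Function.uncurry w) ∧ LocBdd N T w

/-- The Duhamel identity for the scalar problem (E) `∂ₜw = Δw + α w^A + β w^B` at time `t`. -/
def DuhamelScalar (N : ℕ) (α β A B : ℝ) (w₀ : Euc N → ℝ) (w : Euc N → ℝ → ℝ) (t : ℝ) : Prop :=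
  ∀ᵐ x ∂(volume : Measure (Euc N)), ENNReal.ofReal (w x t) =
    heatS N t w₀ x +
      ∫⁻ s in Set.Ioo 0 t, heatS N (t - s) (fun y => α * w y s ^ A + β * w y s ^ B) x

/-- The Duhamel inequality (`≥`, with finite left-hand side) for the scalar problem (E). -/
def DuhamelSuperScalar (N : ℕ) (α β A B : ℝ) (w₀ : Euc N → ℝ) (w : Euc N → ℝ → ℝ)
    (t : ℝ) : Prop :=
  ∀ᵐ x ∂(volume : Measure (Euc N)),
    heatS N t w₀ x +
        (∫⁻ s in Set.Ioo 0 t, heatS N (t - s) (fun y => α * w y s ^ A + β * w y s ^ B) x) ≤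
      ENNReal.ofReal (w x t)

/-- `w` is a solution of the scalar problem (E) on `ℝ^N × (0,T)`. -/
def IsSolScalar (N : ℕ) (α β A B : ℝ) (w₀ : Euc N → ℝ) (T : ℝ≥0∞)
    (w : Euc N → ℝ → ℝ) : Prop :=
  ScalarRegular N T w ∧
  ∀ t : ℝ, 0 < t → ENNReal.ofReal t < T → DuhamelScalar N α β A B w₀ w t

/-- `w` is a supersolution of the scalar problem (E) on `ℝ^N × (0,T)`. -/
def IsSuperScalar (N : ℕ) (α β A B : ℝ) (w₀ : Euc N → ℝ) (T : ℝ≥0∞)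
    (w : Euc N → ℝ → ℝ) : Prop :=
  ScalarRegular N T w ∧
  ∀ t : ℝ, 0 < t → ENNReal.ofReal t < T → DuhamelSuperScalar N α β A B w₀ w t

/-- The Duhamel identities for the strongly coupled system (SC)
`∂ₜu = Δu + u^{p₁} v^{p₂}`, `∂ₜv = Δv + u^{q₁} v^{q₂}` at time `t`. -/
def DuhamelSC (N : ℕ) (p₁ p₂ q₁ q₂ : ℝ) (u₀ v₀ : Euc N → ℝ) (u v : Euc N → ℝ → ℝ)
    (t : ℝ) : Prop :=
  (∀ᵐ x ∂(volume : Measure (Euc N)), ENNReal.ofReal (u x t) =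
      heatS N t u₀ x +
        ∫⁻ s in Set.Ioo 0 t, heatS N (t - s) (fun y => u y s ^ p₁ * v y s ^ p₂) x) ∧
  (∀ᵐ x ∂(volume : Measure (Euc N)), ENNReal.ofReal (v x t) =
      heatS N t v₀ x +
        ∫⁻ s in Set.Ioo 0 t, heatS N (t - s) (fun y => u y s ^ q₁ * v y s ^ q₂) x)

/-- `(u,v)` is a solution of the strongly coupled system (SC) on `ℝ^N × (0,T)`. -/
def IsSolSC (N : ℕ) (p₁ p₂ q₁ q₂ : ℝ) (u₀ v₀ : Euc N → ℝ) (T : ℝ≥0∞)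
    (u v : Euc N → ℝ → ℝ) : Prop :=
  PairRegular N T u v ∧
  ∀ t : ℝ, 0 < t → ENNReal.ofReal t < T → DuhamelSC N p₁ p₂ q₁ q₂ u₀ v₀ u v t

/-!
Starting from zero, the Picard iterates of the Duhamel map are increasing, because the heat kernel
and the powers `r ↦ r ^ p` with `p ≥ 0` are monotone, and by the same monotonicity they stay below
any supersolution. Their supremum in `[0,∞]` solves the integral equations by monotone convergence,
and the supersolution makes it finite almost everywhere and locally bounded in time.
-/

theorem ennreal_iSup_rpow {ι : Sort*} [Nonempty ι] {p : ℝ} (hp : 0 ≤ p) (a : ι → ℝ≥0∞) :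
    (⨆ i, a i) ^ p = ⨆ i, a i ^ p := by
  rcases hp.eq_or_lt with rfl | hp
  · simp
  · exact (ENNReal.orderIsoRpow p hp).map_iSup a

theorem measurable_setLIntegral_Ioo {α : Type*} [MeasurableSpace α] {a b : α → ℝ}
    {G : α → ℝ → ℝ≥0∞} (ha : Measurable a) (hb : Measurable b)
    (hG : Measurable (Function.uncurry G)) :
    Measurable fun z => ∫⁻ s in Set.Ioo (a z) (b z), G z s := by
  simp_rw [← lintegral_indicator measurableSet_Ioo]
  have hS : MeasurableSet {w : α × ℝ | w.2 ∈ Set.Ioo (a w.1) (b w.1)} :=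
    (measurableSet_lt (ha.comp measurable_fst) measurable_snd).inter
      (measurableSet_lt measurable_snd (hb.comp measurable_fst))
  exact (hG.indicator hS).lintegral_prod_right'

section HeatSemigroup

variable {N : ℕ}

/-- The Gaussian heat kernel `(4πt)^{-N/2} exp(-|x-y|²/(4t))`, valued in `[0,∞]` so that it can be
integrated against functions that may be infinite; only `t > 0` is meaningful. -/
def heatKernel (t : ℝ) (x y : Euc N) : ℝ≥0∞ :=
  ENNReal.ofReal ((4 * Real.pi * t) ^ (-(N : ℝ) / 2) * Real.exp (-‖x - y‖ ^ 2 / (4 * t)))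

/-- The heat semigroup acting on `[0,∞]`-valued functions; the analogue of `heatS`, which acts on
real-valued ones. -/
def lheat (t : ℝ) (φ : Euc N → ℝ≥0∞) (x : Euc N) : ℝ≥0∞ :=
  ∫⁻ y, heatKernel t x y * φ y

theorem heatS_eq_lheat {t : ℝ} (ht : 0 ≤ t) (φ : Euc N → ℝ) (x : Euc N) :
    heatS N t φ x = lheat t (fun y => ENNReal.ofReal (φ y)) x := by
  unfold heatS lheat heatKernel
  refine lintegral_congr fun y => ENNReal.ofReal_mul ?_
  positivity

@[fun_prop]
theorem measurable_heatKernel {α : Type*} [MeasurableSpace α] {τ : α → ℝ} {ξ η : α → Euc N}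
    (hτ : Measurable τ) (hξ : Measurable ξ) (hη : Measurable η) :
    Measurable fun a => heatKernel (τ a) (ξ a) (η a) := by
  unfold heatKernel
  fun_prop

theorem measurable_lheat {α : Type*} [MeasurableSpace α] {τ : α → ℝ} {Φ : α → Euc N → ℝ≥0∞}
    {ξ : α → Euc N} (hτ : Measurable τ) (hΦ : Measurable (Function.uncurry Φ))
    (hξ : Measurable ξ) : Measurable fun a => lheat (τ a) (Φ a) (ξ a) := by
  have hintegrand : Measurable fun w : α × Euc N =>
      heatKernel (τ w.1) (ξ w.1) w.2 * Function.uncurry Φ w := by fun_prop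
  exact hintegrand.lintegral_prod_right'

theorem lheat_mono_ae {φ ψ : Euc N → ℝ≥0∞} (h : φ ≤ᵐ[volume] ψ) (t : ℝ) (x : Euc N) :
    lheat t φ x ≤ lheat t ψ x :=
  lintegral_mono_ae <| h.mono fun _ hy => mul_le_mul_right hy _

theorem lheat_iSup {Φ : ℕ → Euc N → ℝ≥0∞} (hΦ : ∀ n, Measurable (Φ n)) (hmono : Monotone Φ)
    (t : ℝ) (x : Euc N) : lheat t (fun y => ⨆ n, Φ n y) x = ⨆ n, lheat t (Φ n) x := by
  unfold lheat
  simp_rw [ENNReal.mul_iSup]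
  exact lintegral_iSup (fun n => by fun_prop) fun _ _ hmn y => mul_le_mul_right (hmono hmn y) _

end HeatSemigroup

section Duhamel

variable {N : ℕ}

/-- The right-hand side `S(t)φ + ∫₀ᵗ S(t-s)F(s) ds` of Duhamel's formula, with initial datum `φ`
and source `F`, as a function into `[0,∞]`. -/
def duhamel (φ : Euc N → ℝ≥0∞) (F : Euc N → ℝ → ℝ≥0∞) (x : Euc N) (t : ℝ) : ℝ≥0∞ :=
  lheat t φ x + ∫⁻ s in Set.Ioo 0 t, lheat (t - s) (fun y => F y s) x

theorem duhamel_ofReal {t : ℝ} (ht : 0 ≤ t) (φ : Euc N → ℝ) (F : Euc N → ℝ → ℝ) (x : Euc N) :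
    duhamel (fun y => ENNReal.ofReal (φ y)) (fun y s => ENNReal.ofReal (F y s)) x t =
      heatS N t φ x + ∫⁻ s in Set.Ioo 0 t, heatS N (t - s) (fun y => F y s) x := by
  rw [duhamel, heatS_eq_lheat ht]
  congr 1
  exact setLIntegral_congr_fun measurableSet_Ioo fun s hs =>
    (heatS_eq_lheat (sub_nonneg.2 hs.2.le) _ x).symm

theorem duhamel_ofReal_rpow {p : ℝ} (hp : 0 ≤ p) {w : Euc N → ℝ → ℝ} (hw : ∀ x t, 0 ≤ w x t)
    {t : ℝ} (ht : 0 ≤ t) (φ : Euc N → ℝ) (x : Euc N) :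
    duhamel (fun y => ENNReal.ofReal (φ y)) (fun y s => ENNReal.ofReal (w y s) ^ p) x t =
      heatS N t φ x + ∫⁻ s in Set.Ioo 0 t, heatS N (t - s) (fun y => w y s ^ p) x := by
  simp_rw [ENNReal.ofReal_rpow_of_nonneg (hw _ _) hp]
  exact duhamel_ofReal ht φ (fun y s => w y s ^ p) x

theorem measurable_duhamel {φ : Euc N → ℝ≥0∞} {F : Euc N → ℝ → ℝ≥0∞} (hφ : Measurable φ)
    (hF : Measurable (Function.uncurry F)) : Measurable (Function.uncurry (duhamel φ F)) := by
  have hfree : Measurable fun z : Euc N × ℝ => lheat z.2 φ z.1 :=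
    measurable_lheat measurable_snd (hφ.comp measurable_snd) measurable_fst
  have hsource : Measurable fun w : (Euc N × ℝ) × ℝ =>
      lheat (w.1.2 - w.2) (fun y => F y w.2) w.1.1 :=
    measurable_lheat (by fun_prop)
      (hF.comp (f := fun w : ((Euc N × ℝ) × ℝ) × Euc N => (w.2, w.1.2)) (by fun_prop))
      (by fun_prop)
  exact hfree.add (measurable_setLIntegral_Ioo measurable_const measurable_snd hsource)

theorem duhamel_mono_ae {F G : Euc N → ℝ → ℝ≥0∞} {t : ℝ}
    (h : ∀ s ∈ Set.Ioo 0 t, ∀ᵐ y, F y s ≤ G y s) (φ : Euc N → ℝ≥0∞) (x : Euc N) :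
    duhamel φ F x t ≤ duhamel φ G x t :=
  add_le_add_right (setLIntegral_mono' measurableSet_Ioo fun s hs => lheat_mono_ae (h s hs) _ x) _

theorem duhamel_congr_ae {F G : Euc N → ℝ → ℝ≥0∞} {t : ℝ}
    (h : ∀ s ∈ Set.Ioo 0 t, ∀ᵐ y, F y s = G y s) (φ : Euc N → ℝ≥0∞) (x : Euc N) :
    duhamel φ F x t = duhamel φ G x t :=
  le_antisymm (duhamel_mono_ae (fun s hs => (h s hs).mono fun _ => le_of_eq) φ x)
    (duhamel_mono_ae (fun s hs => (h s hs).mono fun _ => ge_of_eq) φ x)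

theorem duhamel_iSup {F : ℕ → Euc N → ℝ → ℝ≥0∞} (hF : ∀ n, Measurable (Function.uncurry (F n)))
    (hmono : Monotone F) (φ : Euc N → ℝ≥0∞) (x : Euc N) (t : ℝ) :
    duhamel φ (fun y s => ⨆ n, F n y s) x t = ⨆ n, duhamel φ (F n) x t := by
  have hslice (s : ℝ) : lheat (t - s) (fun y => ⨆ n, F n y s) x =
      ⨆ n, lheat (t - s) (fun y => F n y s) x :=
    lheat_iSup (fun n => (hF n).of_uncurry_right) (fun _ _ hmn y => hmono hmn y s) _ x
  have hmeas (n : ℕ) : Measurable fun s => lheat (t - s) (fun y => F n y s) x :=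
    measurable_lheat (by fun_prop) ((hF n).comp measurable_swap) measurable_const
  unfold duhamel
  simp_rw [hslice, ← ENNReal.add_iSup]
  rw [lintegral_iSup hmeas fun _ _ hmn s =>
    lheat_mono_ae (.of_forall fun y => hmono hmn y s) _ x]

end Duhamel

section Picard

variable {N : ℕ}

/-- The first component of the `n`-th Picard iterate, started from zero, for the system (S) with
exponents `p`, `q` and initial data `φ`, `ψ`. As (S) is invariant under exchanging its two
equations, the second component is `picardIter q p ψ φ n`. -/
def picardIter (p q : ℝ) (φ ψ : Euc N → ℝ≥0∞) : ℕ → Euc N → ℝ → ℝ≥0∞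
  | 0 => 0
  | n + 1 => duhamel φ fun y s => picardIter q p ψ φ n y s ^ p

/-- The monotone limit of the Picard iterates, the first component of an `[0,∞]`-valued solution
of (S); the second component is `picardLimit q p ψ φ`. -/
def picardLimit (p q : ℝ) (φ ψ : Euc N → ℝ≥0∞) (x : Euc N) (t : ℝ) : ℝ≥0∞ :=
  ⨆ n, picardIter p q φ ψ n x t

variable {p q : ℝ} {φ ψ : Euc N → ℝ≥0∞}

theorem measurable_picardIter (hφ : Measurable φ) (hψ : Measurable ψ) (n : ℕ) :
    Measurable (Function.uncurry (picardIter p q φ ψ n)) := by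
  induction n generalizing p q φ ψ with
  | zero => exact measurable_const
  | succ n ih => exact measurable_duhamel hφ ((ih hψ hφ).pow_const p)

theorem measurable_picardLimit (hφ : Measurable φ) (hψ : Measurable ψ) :
    Measurable (Function.uncurry (picardLimit p q φ ψ)) :=
  Measurable.iSup fun n => measurable_picardIter hφ hψ n

theorem picardIter_le_succ (hp : 0 ≤ p) (hq : 0 ≤ q) (n : ℕ) :
    picardIter p q φ ψ n ≤ picardIter p q φ ψ (n + 1) := by
  induction n generalizing p q φ ψ with
  | zero => exact fun _ _ => zero_le
  | succ n ih =>
    exact fun x t => duhamel_mono_ae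
      (fun s _ => .of_forall fun y => ENNReal.rpow_le_rpow (ih hq hp y s) hp) φ x

theorem monotone_picardIter (hp : 0 ≤ p) (hq : 0 ≤ q) : Monotone (picardIter p q φ ψ) :=
  monotone_nat_of_le_succ (picardIter_le_succ hp hq)

theorem picardLimit_eq_duhamel (hp : 0 ≤ p) (hq : 0 ≤ q) (hφ : Measurable φ) (hψ : Measurable ψ)
    (x : Euc N) (t : ℝ) :
    picardLimit p q φ ψ x t = duhamel φ (fun y s => picardLimit q p ψ φ y s ^ p) x t := by
  have hmono : Monotone fun n y s => picardIter q p ψ φ n y s ^ p :=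
    fun _ _ hmn y s => ENNReal.rpow_le_rpow (monotone_picardIter hq hp hmn y s) hp
  have hshift : ⨆ n, picardIter p q φ ψ (n + 1) x t = picardLimit p q φ ψ x t :=
    Monotone.iSup_nat_add (fun _ _ hmn => monotone_picardIter hp hq hmn x t) 1
  calc picardLimit p q φ ψ x t
      = ⨆ n, duhamel φ (fun y s => picardIter q p ψ φ n y s ^ p) x t := hshift.symm
    _ = duhamel φ (fun y s => ⨆ n, picardIter q p ψ φ n y s ^ p) x t :=
        (duhamel_iSup (fun n => (measurable_picardIter hψ hφ n).pow_const p) hmono φ x t).symm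
    _ = duhamel φ (fun y s => picardLimit q p ψ φ y s ^ p) x t := by
        simp only [picardLimit, ennreal_iSup_rpow hp]

end Picard

section Supersolution

variable {N : ℕ} {p q : ℝ} {T : ℝ≥0∞} {u₀ v₀ : Euc N → ℝ} {u v : Euc N → ℝ → ℝ}

theorem LocBdd.mono_ae {w : Euc N → ℝ → ℝ} (hu : LocBdd N T u)
    (h : ∀ t : ℝ, 0 < t → ENNReal.ofReal t < T → ∀ᵐ x, |w x t| ≤ |u x t|) :
    LocBdd N T w := by
  intro τ hτ hτT
  obtain ⟨M, hM⟩ := hu τ hτ hτT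
  refine ⟨M, fun t hτt htT => ?_⟩
  have ht : 0 < t := hτ.trans_le hτt
  have htT' : ENNReal.ofReal t < T :=
    ((ENNReal.ofReal_lt_ofReal_iff (by linarith)).2 (by linarith)).trans_le htT
  filter_upwards [hM t hτt htT, h t ht htT'] with x hux hwx using hwx.trans hux

theorem IsSolSys.isSuperSys (h : IsSolSys N p q u₀ v₀ T u v) : IsSuperSys N p q u₀ v₀ T u v :=
  ⟨h.1, fun t ht htT => ⟨(h.2 t ht htT).1.mono fun _ => ge_of_eq,
    (h.2 t ht htT).2.mono fun _ => ge_of_eq⟩⟩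

namespace IsSuperSys

theorem swap (h : IsSuperSys N p q u₀ v₀ T u v) : IsSuperSys N q p v₀ u₀ T v u :=
  let ⟨⟨hu, hv, hum, hvm, hub, hvb⟩, hD⟩ := h
  ⟨⟨hv, hu, hvm, hum, hvb, hub⟩, fun t ht htT => (hD t ht htT).symm⟩

theorem picardIter_le (h : IsSuperSys N p q u₀ v₀ T u v) (hp : 0 ≤ p) (hq : 0 ≤ q) (n : ℕ)
    {t : ℝ} (ht : 0 < t) (htT : ENNReal.ofReal t < T) :
    ∀ᵐ x, picardIter p q (fun y => ENNReal.ofReal (u₀ y)) (fun y => ENNReal.ofReal (v₀ y)) n x t ≤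
      ENNReal.ofReal (u x t) := by
  induction n generalizing p q u₀ v₀ u v t with
  | zero => exact .of_forall fun _ => zero_le
  | succ n ih =>
    filter_upwards [(h.2 t ht htT).1] with x hx
    rw [← duhamel_ofReal_rpow hp h.1.2.1 ht.le] at hx
    refine (duhamel_mono_ae (fun s hs => ?_) _ x).trans hx
    have hsT : ENNReal.ofReal s < T := (ENNReal.ofReal_le_ofReal hs.2.le).trans_lt htT
    filter_upwards [ih h.swap hq hp hs.1 hsT] with y hy using ENNReal.rpow_le_rpow hy hp

theorem picardLimit_le (h : IsSuperSys N p q u₀ v₀ T u v) (hp : 0 ≤ p) (hq : 0 ≤ q)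
    {t : ℝ} (ht : 0 < t) (htT : ENNReal.ofReal t < T) :
    ∀ᵐ x, picardLimit p q (fun y => ENNReal.ofReal (u₀ y)) (fun y => ENNReal.ofReal (v₀ y)) x t ≤
      ENNReal.ofReal (u x t) := by
  filter_upwards [ae_all_iff.2 fun n => h.picardIter_le hp hq n ht htT] with x hx using iSup_le hx

end IsSuperSys

/-- The first component of the real-valued solution of (S) obtained by Picard iteration. It takes
the junk value `0` where the iterates diverge; if (S) has a supersolution, then for each `t` in
`(0,T)` this happens only for `x` in a null set. -/
def picardSol (p q : ℝ) (u₀ v₀ : Euc N → ℝ) (x : Euc N) (t : ℝ) : ℝ :=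
  (picardLimit p q (fun y => ENNReal.ofReal (u₀ y)) (fun y => ENNReal.ofReal (v₀ y)) x t).toReal

theorem picardSol_nonneg (x : Euc N) (t : ℝ) : 0 ≤ picardSol p q u₀ v₀ x t :=
  ENNReal.toReal_nonneg

theorem measurable_picardSol (hu₀ : Measurable u₀) (hv₀ : Measurable v₀) :
    Measurable (Function.uncurry (picardSol p q u₀ v₀)) :=
  (measurable_picardLimit hu₀.ennreal_ofReal hv₀.ennreal_ofReal).ennreal_toReal

namespace IsSuperSys

theorem ofReal_picardSol (h : IsSuperSys N p q u₀ v₀ T u v) (hp : 0 ≤ p) (hq : 0 ≤ q)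
    {t : ℝ} (ht : 0 < t) (htT : ENNReal.ofReal t < T) :
    ∀ᵐ x, ENNReal.ofReal (picardSol p q u₀ v₀ x t) =
      picardLimit p q (fun y => ENNReal.ofReal (u₀ y)) (fun y => ENNReal.ofReal (v₀ y)) x t := by
  filter_upwards [h.picardLimit_le hp hq ht htT] with x hx
  exact ENNReal.ofReal_toReal (ne_top_of_le_ne_top ENNReal.ofReal_ne_top hx)

theorem locBdd_picardSol (h : IsSuperSys N p q u₀ v₀ T u v) (hp : 0 ≤ p) (hq : 0 ≤ q) :
    LocBdd N T (picardSol p q u₀ v₀) := by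
  obtain ⟨hu, -, -, -, hub, -⟩ := h.1
  refine hub.mono_ae fun t ht htT => ?_
  filter_upwards [h.picardLimit_le hp hq ht htT] with x hx
  rw [abs_of_nonneg (picardSol_nonneg x t), abs_of_nonneg (hu x t)]
  exact ENNReal.toReal_le_of_le_ofReal (hu x t) hx

theorem picardSol_duhamel (h : IsSuperSys N p q u₀ v₀ T u v) (hp : 0 ≤ p) (hq : 0 ≤ q)
    (hu₀ : Measurable u₀) (hv₀ : Measurable v₀) {t : ℝ} (ht : 0 < t)
    (htT : ENNReal.ofReal t < T) :
    ∀ᵐ x, ENNReal.ofReal (picardSol p q u₀ v₀ x t) = heatS N t u₀ x +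
      ∫⁻ s in Set.Ioo 0 t, heatS N (t - s) (fun y => picardSol q p v₀ u₀ y s ^ p) x := by
  filter_upwards [h.ofReal_picardSol hp hq ht htT] with x hx
  rw [hx, picardLimit_eq_duhamel hp hq hu₀.ennreal_ofReal hv₀.ennreal_ofReal,
    ← duhamel_ofReal_rpow hp picardSol_nonneg ht.le]
  refine duhamel_congr_ae (fun s hs => ?_) _ x
  have hsT : ENNReal.ofReal s < T := (ENNReal.ofReal_le_ofReal hs.2.le).trans_lt htT
  filter_upwards [h.swap.ofReal_picardSol hq hp hs.1 hsT] with y hy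
  rw [hy]

theorem isSolSys_picardSol (h : IsSuperSys N p q u₀ v₀ T u v) (hp : 0 ≤ p) (hq : 0 ≤ q)
    (hu₀ : Measurable u₀) (hv₀ : Measurable v₀) :
    IsSolSys N p q u₀ v₀ T (picardSol p q u₀ v₀) (picardSol q p v₀ u₀) :=
  ⟨⟨picardSol_nonneg, picardSol_nonneg, measurable_picardSol hu₀ hv₀, measurable_picardSol hv₀ hu₀,
      h.locBdd_picardSol hp hq, h.swap.locBdd_picardSol hq hp⟩,
    fun _ ht htT => ⟨h.picardSol_duhamel hp hq hu₀ hv₀ ht htT,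
      h.swap.picardSol_duhamel hq hp hv₀ hu₀ ht htT⟩⟩

end IsSuperSys

end Supersolution

/-- Lemma 2.2 for the system (S): the system possesses a solution on
`ℝ^N × (0,T)` if and only if it possesses a supersolution on `ℝ^N × (0,T)`. -/
theorem statement1 (N : ℕ) (hN : 1 ≤ N) (p q : ℝ) (hp : 0 ≤ p) (hq : 0 ≤ q)
    (T : ℝ≥0∞) (hT : 0 < T) (u₀ v₀ : Euc N → ℝ)
    (hu₀m : Measurable u₀) (hv₀m : Measurable v₀)
    (hu₀ : ∀ x, 0 ≤ u₀ x) (hv₀ : ∀ x, 0 ≤ v₀ x) :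
    (∃ u v : Euc N → ℝ → ℝ, IsSolSys N p q u₀ v₀ T u v) ↔
      (∃ u v : Euc N → ℝ → ℝ, IsSuperSys N p q u₀ v₀ T u v) := by
  constructor
  · rintro ⟨u, v, h⟩
    exact ⟨u, v, h.isSuperSys⟩
  · rintro ⟨u, v, h⟩
    exact ⟨_, _, h.isSolSys_picardSol hp hq hu₀m hv₀m⟩
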